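/- Let B, C, D be unital C*-algebras and let δ : B → D, γ : C → D be unital *-homomorphisms with at least one of γ, δ surjective, and let A = B ⊕_D C = {(b,c) ∈ B ⊕ C : δ(b) = γ(c)} be the pullback C*-algebra. Then csr(A) ≤ max{csr(B), csr(C), inj_0(D), surj_1(D)} (as elements of ℕ ∪ {∞}). -/

import Mathlib

/-!
# Connected stable rank of a pullback

Let `m = k + 1` be at least the right-hand side, let `e` be the last basis vector, and let `(b, c)` be
a left unimodular vector over the pullback. By symmetry `γ : C → D` is surjective. It suffices to
find a path of invertible matrices over the pullback, starting at `1`, whose end point moves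
`(b, c)` to `(e, e)`.

Since `Lg_m(B)` is connected, a path in `GL_m(B)` from `1` moves `b` to `e` (`orbit_of_isConnected`).
Its image in `GL_m(D)` lifts to `GL_m(C)` (`exists_path_lift`), which reduces the problem to the case
`b = e`, `γ(c) = e`. Connectedness of `Lg_m(C)` gives a path in `GL_m(C)` from `1` moving `c` to `e`,
and its end point lies over an element of `GL_m(D)` that fixes `e`. Injectivity of
`π_0(GL_{m-1}(D)) → π_0(GL_m(D))` allows a correction after which the end point lies over `1`
(`exists_path_endpoint_trivial`), so that the path lies over a loop; surjectivity on `π_1` allows a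
second correction after which the whole path lies over `1` (`exists_path_in_kernel`). Such a path,
together with the constant path `1` in `GL_m(B)`, is a path over the pullback.

All lifts come from `exists_lift_of_homotopy`, which uses a continuous section of `γ`
(`exists_continuous_section`).
-/

open scoped unitInterval

noncomputable section

/-- The set of left unimodular vectors in `A^m`. -/
def Lg (m : ℕ) (A : Type*) [Ring A] : Set (Fin m → A) :=
  {v | ∃ w : Fin m → A, ∑ i, w i * v i = 1}

/-- `GL_m(A)` acts transitively on `Lg_m(A)`. -/
def GLtrans (m : ℕ) (A : Type*) [Ring A] : Prop :=
  ∀ v ∈ Lg m A, ∀ w ∈ Lg m A,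
    ∃ M : Matrix (Fin m) (Fin m) A, IsUnit M ∧ M.mulVec v = w

/-- The general stable rank: the least `n ≥ 1` such that `GL_m(A)` acts transitively on
`Lg_m(A)` for all `m ≥ n` (and `∞` if no such `n` exists). -/
def gsr (A : Type*) [Ring A] : ℕ∞ :=
  sInf {N : ℕ∞ | ∃ n : ℕ, N = n ∧ 1 ≤ n ∧ ∀ m : ℕ, n ≤ m → GLtrans m A}

/-- The connected stable rank: the least `n ≥ 1` such that `Lg_m(A)` is connected for all
`m ≥ n` (and `∞` if no such `n` exists). -/
def csr (A : Type*) [Ring A] [TopologicalSpace A] : ℕ∞ :=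
  sInf {N : ℕ∞ | ∃ n : ℕ, N = n ∧ 1 ≤ n ∧ ∀ m : ℕ, n ≤ m → IsConnected (Lg m A)}

/-- Invertible `m × m` matrices over `A`, topologized as a subspace of the matrices. -/
abbrev GLs (m : ℕ) (A : Type*) [Ring A] : Type _ :=
  {M : Matrix (Fin m) (Fin m) A // IsUnit M}

/-- The identity matrix as base point of `GL_m(A)`. -/
def GLone (m : ℕ) (A : Type*) [Ring A] : GLs m A := ⟨1, isUnit_one⟩

/-- The stabilization map `M ↦ diag(M, 1)` on matrices. -/
def stab {A : Type*} [Ring A] {n : ℕ} (M : Matrix (Fin n) (Fin n) A) :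
    Matrix (Fin (n + 1)) (Fin (n + 1)) A :=
  (Matrix.fromBlocks M 0 0 (1 : Matrix (Fin 1) (Fin 1) A)).submatrix
    finSumFinEquiv.symm finSumFinEquiv.symm

theorem stab_one {A : Type*} [Ring A] {n : ℕ} :
    stab (1 : Matrix (Fin n) (Fin n) A) = 1 := by
  rw [stab, Matrix.fromBlocks_one, Matrix.submatrix_one_equiv]

theorem stab_mul {A : Type*} [Ring A] {n : ℕ} (M N : Matrix (Fin n) (Fin n) A) :
    stab M * stab N = stab (M * N) := by
  rw [stab, stab, stab, Matrix.submatrix_mul_equiv, Matrix.fromBlocks_multiply]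
  simp

theorem stab_isUnit {A : Type*} [Ring A] {n : ℕ} {M : Matrix (Fin n) (Fin n) A}
    (h : IsUnit M) : IsUnit (stab M) := by
  obtain ⟨u, rfl⟩ := h
  refine isUnit_iff_exists.mpr ⟨stab (u⁻¹ : (Matrix (Fin n) (Fin n) A)ˣ).val, ?_, ?_⟩
  · rw [stab_mul, Units.mul_inv, stab_one]
  · rw [stab_mul, Units.inv_mul, stab_one]

theorem continuous_stab {A : Type*} [Ring A] [TopologicalSpace A] {n : ℕ} :
    Continuous fun M : Matrix (Fin n) (Fin n) A => stab M := by
  unfold stab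
  exact (continuous_id.matrix_fromBlocks continuous_const continuous_const
    continuous_const).matrix_submatrix _ _

/-- The stabilization map `θ : GL_n(A) → GL_{n+1}(A)`, `M ↦ diag(M, 1)`. -/
def stabGL {A : Type*} [Ring A] {n : ℕ} (M : GLs n A) : GLs (n + 1) A :=
  ⟨stab M.1, stab_isUnit M.2⟩

theorem stabGL_one {A : Type*} [Ring A] {n : ℕ} :
    stabGL (GLone n A) = GLone (n + 1) A :=
  Subtype.ext stab_one

theorem continuous_stabGL {A : Type*} [Ring A] [TopologicalSpace A] {n : ℕ} :
    Continuous (stabGL (A := A) (n := n)) :=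
  Continuous.subtype_mk (continuous_stab.comp continuous_subtype_val) _

/-- Stabilization as a continuous map `GL_n(A) → GL_{n+1}(A)`. -/
def stabCM (n : ℕ) (A : Type*) [Ring A] [TopologicalSpace A] :
    ContinuousMap (GLs n A) (GLs (n + 1) A) :=
  ⟨stabGL, continuous_stabGL⟩

theorem stabCM_one {A : Type*} [Ring A] [TopologicalSpace A] {n : ℕ} :
    stabCM n A (GLone n A) = GLone (n + 1) A :=
  stabGL_one

/-- Push a generalized loop forward along a based continuous map. -/
def GenLoop.push {N X Y : Type*} [TopologicalSpace X] [TopologicalSpace Y]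
    {x : X} {y : Y} (f : ContinuousMap X Y) (hf : f x = y)
    (p : GenLoop N X x) : GenLoop N Y y :=
  ⟨f.comp p.1, fun t ht => by
    simp only [ContinuousMap.comp_apply]
    rw [p.2 t ht, hf]⟩

/-- The map `π_k(GL_m(A)) → π_k(GL_{m+1}(A))` (based at the identity matrices) induced by
the stabilization map is injective. -/
def pikInj (k : ℕ) (A : Type*) [Ring A] [TopologicalSpace A] (m : ℕ) : Prop :=
  ∀ a b : GenLoop (Fin k) (GLs m A) (GLone m A),
    GenLoop.Homotopic (GenLoop.push (stabCM m A) stabCM_one a)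
      (GenLoop.push (stabCM m A) stabCM_one b) → GenLoop.Homotopic a b

/-- The map `π_k(GL_m(A)) → π_k(GL_{m+1}(A))` (based at the identity matrices) induced by
the stabilization map is surjective. -/
def pikSurj (k : ℕ) (A : Type*) [Ring A] [TopologicalSpace A] (m : ℕ) : Prop :=
  ∀ b : GenLoop (Fin k) (GLs (m + 1) A) (GLone (m + 1) A),
    ∃ a : GenLoop (Fin k) (GLs m A) (GLone m A),
      GenLoop.Homotopic (GenLoop.push (stabCM m A) stabCM_one a) b

/-- `inj_k(A)`: the least `n ≥ 1` such that `π_k(GL_{m-1}(A)) → π_k(GL_m(A))` is injective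
for all `m ≥ n` (and `∞` if no such `n` exists). -/
def injRank (k : ℕ) (A : Type*) [Ring A] [TopologicalSpace A] : ℕ∞ :=
  sInf {N : ℕ∞ | ∃ n : ℕ, N = n ∧ 1 ≤ n ∧ ∀ m : ℕ, n ≤ m + 1 → pikInj k A m}

/-- `surj_k(A)`: the least `n ≥ 1` such that `π_k(GL_{m-1}(A)) → π_k(GL_m(A))` is surjective
for all `m ≥ n` (and `∞` if no such `n` exists). -/
def surjRank (k : ℕ) (A : Type*) [Ring A] [TopologicalSpace A] : ℕ∞ :=
  sInf {N : ℕ∞ | ∃ n : ℕ, N = n ∧ 1 ≤ n ∧ ∀ m : ℕ, n ≤ m + 1 → pikSurj k A m}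

/-- The pullback `B ⊕_D C` as a star subalgebra of `B × C`. -/
def pullbackAlg {B C D : Type*} [Ring B] [Ring C] [Ring D]
    [Algebra ℂ B] [Algebra ℂ C] [Algebra ℂ D]
    [StarRing B] [StarRing C] [StarRing D]
    [StarModule ℂ B] [StarModule ℂ C] [StarModule ℂ D]
    (δ : B →⋆ₐ[ℂ] D) (γ : C →⋆ₐ[ℂ] D) : StarSubalgebra ℂ (B × C) where
  carrier := {x | δ x.1 = γ x.2}
  mul_mem' {a b} ha hb := by
    simp only [Set.mem_setOf_eq, Prod.fst_mul, Prod.snd_mul, map_mul] at *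
    rw [ha, hb]
  one_mem' := by simp
  add_mem' {a b} ha hb := by
    simp only [Set.mem_setOf_eq, Prod.fst_add, Prod.snd_add, map_add] at *
    rw [ha, hb]
  zero_mem' := by simp
  algebraMap_mem' r := by
    simp only [Set.mem_setOf_eq]
    show δ ((algebraMap ℂ (B × C)) r).1 = γ ((algebraMap ℂ (B × C)) r).2
    simp only [Prod.algebraMap_apply]
    rw [AlgHomClass.commutes, AlgHomClass.commutes]
  star_mem' {a} ha := by
    simp only [Set.mem_setOf_eq, Prod.fst_star, Prod.snd_star, map_star] at *
    rw [ha]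

/-! ### Continuous sections of Banach space surjections -/

open Filter Topology


/-- A form of the Bartle–Graves theorem: a bounded linear surjection of Banach spaces has a continuous,
in general nonlinear, section. Approximate sections come from partitions of unity on the
(paracompact) target; each is corrected by one of size `K * (1 / 2) ^ n`, where `K` is the constant
of the open mapping theorem, and the corrections sum to a section. -/
theorem exists_continuous_section {E F : Type*} [NormedAddCommGroup E] [NormedSpace ℝ E]
    [CompleteSpace E] [NormedAddCommGroup F] [NormedSpace ℝ F] [CompleteSpace F]
    (f : E →L[ℝ] F) (hf : Function.Surjective f) :
    ∃ s : C(F, E), (∀ x, f (s x) = x) ∧ s 0 = 0 := by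
  obtain ⟨K, hK, hKf⟩ := f.exists_preimage_norm_le hf
  have step : ∀ (n : ℕ) (s : {s : C(F, E) // ∀ x, ‖f (s x) - x‖ < (1 / 2 : ℝ) ^ n}),
      ∃ s' : {s : C(F, E) // ∀ x, ‖f (s x) - x‖ < (1 / 2 : ℝ) ^ (n + 1)},
        ∀ x, ‖s'.1 x - s.1 x‖ < K * (1 / 2 : ℝ) ^ n := by
    rintro n ⟨s, hs⟩
    obtain ⟨g, hg⟩ := exists_continuous_forall_mem_convex_of_local_const
      (t := fun x => {c : E | ‖f c + f (s x) - x‖ < (1 / 2 : ℝ) ^ (n + 1)} ∩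
        {c : E | ‖c‖ < K * (1 / 2 : ℝ) ^ n}) (fun x => by
        refine Convex.inter ?_ ?_
        · have : {c : E | ‖f c + f (s x) - x‖ < (1 / 2 : ℝ) ^ (n + 1)} =
              f ⁻¹' (Metric.ball (x - f (s x)) ((1 / 2 : ℝ) ^ (n + 1))) := by
            ext c
            simp [dist_eq_norm, sub_sub_eq_add_sub]
          rw [this]
          exact (convex_ball _ _).linear_preimage f.toLinearMap
        · have : {c : E | ‖c‖ < K * (1 / 2 : ℝ) ^ n} = Metric.ball 0 (K * (1 / 2 : ℝ) ^ n) := by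
            ext c; simp
          rw [this]
          exact convex_ball _ _) (fun x => by
        obtain ⟨c, hc, hcn⟩ := hKf (x - f (s x))
        have hlt : ‖c‖ < K * (1 / 2 : ℝ) ^ n :=
          hcn.trans_lt (mul_lt_mul_of_pos_left (by rw [norm_sub_rev]; exact hs x) hK)
        refine ⟨c, ?_⟩
        have hcont : Continuous fun y => ‖f c + f (s y) - y‖ := by fun_prop
        have h0 : ‖f c + f (s x) - x‖ < (1 / 2 : ℝ) ^ (n + 1) := by
          rw [hc]; simp
        filter_upwards [hcont.continuousAt.eventually_lt continuousAt_const h0] with y hy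
        exact ⟨hy, hlt⟩)
    refine ⟨⟨g + s, fun x => ?_⟩, fun x => ?_⟩
    · simpa using (hg x).1
    · simpa using (hg x).2
  have start : ∃ s : C(F, E), ∀ x, ‖f (s x) - x‖ < (1 / 2 : ℝ) ^ 0 := by
    obtain ⟨g, hg⟩ := exists_continuous_forall_mem_convex_of_local_const
      (t := fun x => f ⁻¹' (Metric.ball x ((1 / 2 : ℝ) ^ 0)))
      (fun x => (convex_ball _ _).linear_preimage f.toLinearMap) (fun x => by
        obtain ⟨c, hc⟩ := hf x
        refine ⟨c, ?_⟩
        have : ∀ᶠ y in 𝓝 x, dist (f c) y < (1 / 2 : ℝ) ^ 0 :=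
          ContinuousAt.eventually_lt (by fun_prop) continuousAt_const (by simp [hc])
        filter_upwards [this] with y hy
        exact hy)
    exact ⟨g, fun x => by simpa [dist_eq_norm] using hg x⟩
  obtain ⟨s0, hs0⟩ := start
  choose nxt hnxt using step
  let u : (n : ℕ) → {s : C(F, E) // ∀ x, ‖f (s x) - x‖ < (1 / 2 : ℝ) ^ n} := fun n =>
    Nat.rec ⟨s0, hs0⟩ (fun n s => nxt n s) n
  have hu : ∀ n x, dist ((u n).1 x) ((u (n + 1)).1 x) ≤ K * (1 / 2 : ℝ) ^ n := fun n x => by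
    rw [dist_comm, dist_eq_norm]
    exact (hnxt n (u n) x).le
  have hlim : ∀ x, ∃ l, Tendsto (fun n => (u n).1 x) atTop (𝓝 l) := fun x =>
    cauchySeq_tendsto_of_complete
      (cauchySeq_of_le_geometric (1 / 2) K (by norm_num) (fun n => hu n x))
  choose g hg using hlim
  have hunif : TendstoUniformly (fun n x => (u n).1 x) g atTop := by
    rw [Metric.tendstoUniformly_iff]
    intro ε hε
    have h0 : Tendsto (fun n : ℕ => K * (1 / 2 : ℝ) ^ n / (1 - 1 / 2)) atTop (𝓝 0) := by
      have := ((tendsto_pow_atTop_nhds_zero_of_lt_one (r := (1 / 2 : ℝ)) (by norm_num)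
        (by norm_num)).const_mul K).div_const (1 - 1 / 2)
      simpa using this
    filter_upwards [h0.eventually_lt_const hε] with n hn x
    rw [dist_comm]
    exact (dist_le_of_le_geometric_of_tendsto (1 / 2) K (by norm_num) (fun n => hu n x)
      (hg x) n).trans_lt hn
  have hgc : Continuous g := hunif.continuous (Frequently.of_forall fun n => (u n).1.continuous)
  have hfg : ∀ x, f (g x) = x := fun x => by
    have h1 : Tendsto (fun n => f ((u n).1 x) - x) atTop (𝓝 (f (g x) - x)) :=
      ((f.continuous.tendsto _).comp (hg x)).sub_const x
    have h2 : Tendsto (fun n => f ((u n).1 x) - x) atTop (𝓝 0) :=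
      squeeze_zero_norm (fun n => ((u n).2 x).le)
        (tendsto_pow_atTop_nhds_zero_of_lt_one (by norm_num) (by norm_num))
    exact sub_eq_zero.1 (tendsto_nhds_unique h1 h2)
  refine ⟨⟨fun x => g x - g 0, by fun_prop⟩, fun x => ?_, by simp⟩
  simp [hfg]

/-! ### Invertible matrices over a Banach ring and their orbits -/

/-- `GL_k(R)` as a group of units; it carries the units topology. -/
abbrev GLu (k : ℕ) (R : Type*) [Ring R] : Type _ := (Matrix (Fin k) (Fin k) R)ˣ

section NormedMatrix

attribute [local instance] Matrix.linftyOpNormedRing Matrix.linftyOpNormedAlgebra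

theorem isOpenEmbedding_glu_val (k : ℕ) (R : Type*) [NormedRing R] [CompleteSpace R] :
    IsOpenEmbedding (Units.val : GLu k R → Matrix (Fin k) (Fin k) R) := by
  have : @CompleteSpace (Matrix (Fin k) (Fin k) R) PseudoMetricSpace.toUniformSpace :=
    inferInstanceAs (CompleteSpace (Fin k → Fin k → R))
  exact Units.isOpenEmbedding_val

theorem locallyPathConnectedSpace_glu (k : ℕ) (R : Type*) [NormedRing R] [NormedAlgebra ℝ R]
    [CompleteSpace R] : LocallyPathConnectedSpace (GLu k R) := by
  have : LocallyPathConnectedSpace (Matrix (Fin k) (Fin k) R) :=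
    inferInstanceAs (LocallyPathConnectedSpace (Fin k → Fin k → R))
  exact (isOpenEmbedding_glu_val k R).locallyPathConnectedSpace

end NormedMatrix

/-- The identity component of `GL_k(R)` acts transitively on a connected `Lg_k(R)`: its orbits are open,
since for `y` near `x` and `∑ i, a i * x i = 1` the matrix `1 + (y - x) a` is close to the identity
and sends `x` to `y`. -/
theorem orbit_of_isConnected {k : ℕ} {R : Type*} [NormedRing R] [NormedAlgebra ℝ R]
    [CompleteSpace R] (h : IsConnected (Lg k R)) {v w : Fin k → R}
    (hv : v ∈ Lg k R) (hw : w ∈ Lg k R) :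
    ∃ u : GLu k R, Joined 1 u ∧ u.1.mulVec v = w := by
  refine h.isPreconnected.induction₂
    (fun v w => ∃ u : GLu k R, Joined 1 u ∧ u.1.mulVec v = w) ?_ ?_ ?_ hv hw
  · rintro x ⟨a, ha⟩
    have hop := isOpenEmbedding_glu_val k R
    have := locallyPathConnectedSpace_glu k R
    have hnhds : Units.val '' (pathComponent (1 : GLu k R)) ∈
        𝓝 (1 : Matrix (Fin k) (Fin k) R) := by
      have := hop.isOpenMap.image_mem_nhds
        ((IsOpen.pathComponent (1 : GLu k R)).mem_nhds (mem_pathComponent_self _))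
      simpa using this
    have hc : Continuous fun y : Fin k → R => 1 + Matrix.vecMulVec (y - x) a := by
      refine continuous_const.add (Continuous.matrix_vecMulVec ?_ continuous_const)
      fun_prop
    have ht : Tendsto (fun y : Fin k → R => 1 + Matrix.vecMulVec (y - x) a) (𝓝 x) (𝓝 1) := by
      have := hc.tendsto x
      simpa using this
    refine nhdsWithin_le_nhds ?_
    filter_upwards [ht.eventually hnhds] with y hy
    obtain ⟨u, hu, hu'⟩ := hy
    refine ⟨u, hu, ?_⟩
    rw [hu', Matrix.add_mulVec, Matrix.one_mulVec, Matrix.vecMulVec_mulVec]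
    have : a ⬝ᵥ x = 1 := ha
    simp [this]
  · rintro x y z _ _ _ ⟨u, hu, rfl⟩ ⟨u', hu', rfl⟩
    refine ⟨u' * u, ?_, by simp [Matrix.mulVec_mulVec]⟩
    simpa using hu'.mul hu
  · rintro x y _ _ ⟨u, hu, rfl⟩
    refine ⟨u⁻¹, ?_, by simp [Matrix.mulVec_mulVec]⟩
    obtain ⟨p⟩ := hu
    exact ⟨⟨⟨fun t => (p t)⁻¹, by fun_prop⟩, by simp, by simp⟩⟩

/-! ### Lifting paths and homotopies of invertible matrices -/

/-- The group homomorphism `GL_k(R) → GL_k(S)` induced entrywise by a ring homomorphism. -/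
def mapU {R S : Type*} [Ring R] [Ring S] (f : R →+* S) (k : ℕ) : GLu k R →* GLu k S :=
  Units.map (f.mapMatrix : Matrix (Fin k) (Fin k) R →+* Matrix (Fin k) (Fin k) S).toMonoidHom

theorem mapU_val {R S : Type*} [Ring R] [Ring S] (f : R →+* S) {k : ℕ} (u : GLu k R) :
    (mapU f k u).1 = u.1.map f := rfl

theorem continuous_mapU {R S : Type*} [Ring R] [Ring S] [TopologicalSpace R] [TopologicalSpace S]
    (f : R →+* S) (hf : Continuous f) (k : ℕ) : Continuous (mapU f k) :=
  Continuous.units_map _ (continuous_id.matrix_map hf)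

/-- If a map `T → GL_k(S)` is null-homotopic through maps that are constantly `1` on `L`, it lifts to a
map `T → GL_k(R)` that is `1` on `L`. Maps close to the constant map `1` lift by applying the
section `τ` entrywise, and lifts multiply, so that liftability of `(H s)⁻¹ * H s'` is an equivalence
relation with open classes on the interval. -/
theorem exists_lift_of_homotopy {R S : Type*} [NormedRing R] [CompleteSpace R] [NormedRing S]
    [CompleteSpace S] (f : R →+* S) (τ : C(S, R)) (hτ : ∀ x, f (τ x) = x) (hτ0 : τ 0 = 0)
    {k : ℕ} {T : Type*} [TopologicalSpace T] [CompactSpace T] (L : Set T)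
    (H : C(I × T, GLu k S)) (h0 : ∀ t, H (0, t) = 1) (hL : ∀ s, ∀ t ∈ L, H (s, t) = 1) :
    ∃ q : C(T, GLu k R), (∀ t, mapU f k (q t) = H (1, t)) ∧ ∀ t ∈ L, q t = 1 := by
  have hop := isOpenEmbedding_glu_val k R
  -- the entrywise lift; it takes values in `GL_k(R)` only near `1`
  let Φ : GLu k S → Matrix (Fin k) (Fin k) R := fun g => 1 + (g.1 - 1).map τ
  have hΦ : Continuous Φ :=
    continuous_const.add ((Units.continuous_val.sub continuous_const).matrix_map τ.continuous)
  have hΦ1 : Φ 1 = 1 := by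
    ext i j; simp [Φ, hτ0]
  have hfΦ : ∀ g, (Φ g).map f = g.1 := fun g => by
    ext i j
    simp [Φ, hτ, Matrix.one_apply, apply_ite f]
  have hnear : ∀ᶠ g in 𝓝 (1 : GLu k S), Φ g ∈ Set.range (Units.val : GLu k R → _) :=
    hΦ.continuousAt.eventually_mem (hop.isOpen_range.mem_nhds ⟨1, by simp [hΦ1]⟩)
  let P : I → I → Prop := fun s s' =>
    ∃ q : C(T, GLu k R), (∀ t, mapU f k (q t) = (H (s, t))⁻¹ * H (s', t)) ∧ ∀ t ∈ L, q t = 1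
  have hP : P 0 1 := by
    refine isPreconnected_univ.induction₂ P ?_ ?_ ?_ (Set.mem_univ _) (Set.mem_univ _)
    · intro s _
      rw [nhdsWithin_univ]
      have hev := isCompact_univ.eventually_forall_of_forall_eventually (x₀ := s)
        (K := (Set.univ : Set T))
        (P := fun s' t => Φ ((H (s, t))⁻¹ * H (s', t)) ∈ Set.range (Units.val : GLu k R → _))
        (fun t _ => by
          have hc : Tendsto (fun z : I × T => (H (s, z.2))⁻¹ * H (z.1, z.2)) (𝓝 (s, t))
              (𝓝 1) := by
            have hc : Continuous fun z : I × T => (H (s, z.2))⁻¹ * H (z.1, z.2) := by fun_prop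
            have := hc.tendsto (s, t)
            simpa using this
          exact hc.eventually hnear)
      filter_upwards [hev] with s' hs'
      choose q hq using fun t => hs' t (Set.mem_univ t)
      refine ⟨⟨q, ?_⟩, fun t => ?_, fun t ht => ?_⟩
      · rw [hop.isInducing.continuous_iff]
        have : Units.val ∘ q = fun t => Φ ((H (s, t))⁻¹ * H (s', t)) := funext hq
        rw [this]
        exact hΦ.comp (by fun_prop)
      · refine Units.ext ?_
        rw [mapU_val]
        exact (congrArg (fun M => M.map f) (hq t)).trans (hfΦ _)
      · refine Units.ext ?_
        have := hq t
        rw [hL s t ht, hL s' t ht] at this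
        simpa [hΦ1] using this
    · rintro x y z - - - ⟨q, hq, hq'⟩ ⟨r, hr, hr'⟩
      refine ⟨q * r, fun t => ?_, fun t ht => ?_⟩
      · simp [hq, hr, mul_assoc]
      · simp [hq' t ht, hr' t ht]
    · rintro x y - - ⟨q, hq, hq'⟩
      refine ⟨q⁻¹, fun t => ?_, fun t ht => ?_⟩
      · simp [hq]
      · simp [hq' t ht]
  obtain ⟨q, hq, hq'⟩ := hP
  exact ⟨q, fun t => by simpa [h0] using hq t, hq'⟩

/-- Paths starting at `1` lift: `(s, t) ↦ p (s * t)` contracts them relative to `t = 0`. -/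
theorem exists_path_lift {R S : Type*} [NormedRing R] [CompleteSpace R] [NormedRing S]
    [CompleteSpace S] (f : R →+* S) (τ : C(S, R)) (hτ : ∀ x, f (τ x) = x) (hτ0 : τ 0 = 0)
    {k : ℕ} (p : C(I, GLu k S)) (hp : p 0 = 1) :
    ∃ q : C(I, GLu k R), (∀ t, mapU f k (q t) = p t) ∧ q 0 = 1 := by
  obtain ⟨q, hq, hq0⟩ := exists_lift_of_homotopy f τ hτ hτ0 {0}
    ⟨fun z : I × I => p (z.1 * z.2), by fun_prop⟩ (by simp [hp]) (by simp [hp])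
  exact ⟨q, by simpa using hq, hq0 0 rfl⟩

/-! ### Stabilization and the stabilizer of the last basis vector -/

/-- The stabilization homomorphism on groups of units. -/
def stabU (k : ℕ) (R : Type*) [Ring R] : GLu k R →* GLu (k + 1) R :=
  Units.map ⟨⟨stab, stab_one⟩, fun M N => (stab_mul M N).symm⟩

theorem stabU_val {k : ℕ} {R : Type*} [Ring R] (u : GLu k R) : (stabU k R u).1 = stab u.1 := rfl

@[fun_prop]
theorem continuous_stabU (k : ℕ) (R : Type*) [Ring R] [TopologicalSpace R] :
    Continuous (stabU k R) :=
  Continuous.units_map _ continuous_stab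

theorem mapU_stabU {R S : Type*} [Ring R] [Ring S] (f : R →+* S) {k : ℕ} (u : GLu k R) :
    mapU f (k + 1) (stabU k R u) = stabU k S (mapU f k u) := by
  refine Units.ext ?_
  rw [mapU_val, stabU_val, stabU_val, mapU_val, stab, stab, ← Matrix.submatrix_map,
    Matrix.fromBlocks_map]
  simp

/-- The last standard basis vector `e` of `R^{k+1}`. -/
def lastVec (k : ℕ) (R : Type*) [Ring R] : Fin (k + 1) → R := Pi.single (Fin.last k) 1

theorem lastVec_comp (k : ℕ) (R : Type*) [Ring R] :
    lastVec k R ∘ finSumFinEquiv = (Sum.elim 0 1 : Fin k ⊕ Fin 1 → R) := by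
  funext x
  have hl : Fin.natAdd k (0 : Fin 1) = Fin.last k := by ext; simp
  rcases x with i | i
  · have : Fin.castAdd 1 i ≠ Fin.last k := (Fin.castSucc_lt_last i).ne
    simp [lastVec, this]
  · have : i = 0 := Subsingleton.elim _ _
    subst this
    simp [lastVec, hl]

theorem lastVec_mem_Lg (k : ℕ) (R : Type*) [Ring R] : lastVec k R ∈ Lg (k + 1) R :=
  ⟨lastVec k R, by simp [lastVec, Pi.single_apply]⟩

/-- Matrices in block form with respect to the splitting `R^{k+1} = R^k ⊕ R`. -/
def blk {k : ℕ} {R : Type*} [Ring R] (X : Matrix (Fin k) (Fin k) R) (y : Matrix (Fin k) (Fin 1) R)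
    (z : Matrix (Fin 1) (Fin k) R) (w : Matrix (Fin 1) (Fin 1) R) :
    Matrix (Fin (k + 1)) (Fin (k + 1)) R :=
  (Matrix.fromBlocks X y z w).submatrix finSumFinEquiv.symm finSumFinEquiv.symm

theorem blk_mul {k : ℕ} {R : Type*} [Ring R] (X X' : Matrix (Fin k) (Fin k) R)
    (y y' : Matrix (Fin k) (Fin 1) R) (z z' : Matrix (Fin 1) (Fin k) R)
    (w w' : Matrix (Fin 1) (Fin 1) R) :
    blk X y z w * blk X' y' z' w' =
      blk (X * X' + y * z') (X * y' + y * w') (z * X' + w * z') (z * y' + w * w') := by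
  rw [blk, blk, blk, Matrix.submatrix_mul_equiv, Matrix.fromBlocks_multiply]

theorem blk_one {k : ℕ} {R : Type*} [Ring R] :
    blk (1 : Matrix (Fin k) (Fin k) R) 0 0 1 = 1 := stab_one

theorem exists_eq_blk {k : ℕ} {R : Type*} [Ring R] (M : Matrix (Fin (k + 1)) (Fin (k + 1)) R) :
    ∃ X y z w, M = blk X y z w := by
  refine ⟨(M.submatrix finSumFinEquiv finSumFinEquiv).toBlocks₁₁,
    (M.submatrix finSumFinEquiv finSumFinEquiv).toBlocks₁₂,
    (M.submatrix finSumFinEquiv finSumFinEquiv).toBlocks₂₁,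
    (M.submatrix finSumFinEquiv finSumFinEquiv).toBlocks₂₂, ?_⟩
  rw [blk, Matrix.fromBlocks_toBlocks]
  ext i j
  simp

theorem blk_inj {k : ℕ} {R : Type*} [Ring R] {X X' : Matrix (Fin k) (Fin k) R}
    {y y' : Matrix (Fin k) (Fin 1) R} {z z' : Matrix (Fin 1) (Fin k) R}
    {w w' : Matrix (Fin 1) (Fin 1) R} (h : blk X y z w = blk X' y' z' w') :
    X = X' ∧ y = y' ∧ z = z' ∧ w = w' := by
  refine Matrix.fromBlocks_inj.1 ?_
  have := congrArg (fun M => M.submatrix finSumFinEquiv finSumFinEquiv) h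
  simpa [blk] using this

theorem blk_mulVec_lastVec {k : ℕ} {R : Type*} [Ring R] (X : Matrix (Fin k) (Fin k) R)
    (y : Matrix (Fin k) (Fin 1) R) (z : Matrix (Fin 1) (Fin k) R) (w : Matrix (Fin 1) (Fin 1) R) :
    (blk X y z w).mulVec (lastVec k R) = lastVec k R ↔ y = 0 ∧ w = 1 := by
  have h1 : (blk X y z w).mulVec (lastVec k R) = lastVec k R ↔
      (Matrix.fromBlocks X y z w).mulVec (Sum.elim 0 1 : Fin k ⊕ Fin 1 → R) =
        (Sum.elim 0 1 : Fin k ⊕ Fin 1 → R) := by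
    rw [← lastVec_comp, blk, Matrix.submatrix_mulVec_equiv]
    constructor
    · intro h
      funext i
      have := congrFun h (finSumFinEquiv i)
      simpa using this
    · intro h
      funext i
      have := congrFun h (finSumFinEquiv.symm i)
      simpa using this
  rw [h1, Matrix.fromBlocks_mulVec]
  constructor
  · intro h
    constructor
    · ext i j
      have := congrFun h (Sum.inl i)
      have hj : j = 0 := Subsingleton.elim _ _
      subst hj
      simpa [Matrix.mulVec, dotProduct] using this
    · ext i j
      have := congrFun h (Sum.inr i)
      have hj : j = 0 := Subsingleton.elim _ _
      have hi : i = 0 := Subsingleton.elim _ _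
      subst hj hi
      simpa [Matrix.mulVec, dotProduct] using this
  · rintro ⟨rfl, rfl⟩
    simp

theorem stabU_mulVec_lastVec {k : ℕ} {R : Type*} [Ring R] (u : GLu k R) :
    (stabU k R u).1.mulVec (lastVec k R) = lastVec k R :=
  (blk_mulVec_lastVec u.1 0 0 1).2 ⟨rfl, rfl⟩

/-- The lower unitriangular matrix with bottom row `(z, 1)`. -/
def lowU {k : ℕ} {R : Type*} [Ring R] (z : Matrix (Fin 1) (Fin k) R) : GLu (k + 1) R :=
  ⟨blk 1 0 z 1, blk 1 0 (-z) 1, by simp [blk_mul, blk_one], by simp [blk_mul, blk_one]⟩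

@[fun_prop]
theorem continuous_lowU {k : ℕ} {R : Type*} [Ring R] [TopologicalSpace R]
    [IsTopologicalRing R] : Continuous (lowU : Matrix (Fin 1) (Fin k) R → GLu (k + 1) R) := by
  rw [Units.continuous_iff]
  constructor
  · exact (continuous_const.matrix_fromBlocks continuous_const continuous_id
      continuous_const).matrix_submatrix _ _
  · exact (continuous_const.matrix_fromBlocks continuous_const continuous_neg
      continuous_const).matrix_submatrix _ _

theorem lowU_zero {k : ℕ} {R : Type*} [Ring R] :
    lowU (0 : Matrix (Fin 1) (Fin k) R) = 1 := Units.ext blk_one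

theorem lowU_inv {k : ℕ} {R : Type*} [Ring R] (z : Matrix (Fin 1) (Fin k) R) :
    (lowU z)⁻¹ = lowU (-z) := Units.ext rfl

theorem lowU_mulVec_lastVec {k : ℕ} {R : Type*} [Ring R] (z : Matrix (Fin 1) (Fin k) R) :
    (lowU z).1.mulVec (lastVec k R) = lastVec k R :=
  (blk_mulVec_lastVec 1 0 z 1).2 ⟨rfl, rfl⟩

theorem mapU_lowU {R S : Type*} [Ring R] [Ring S] (f : R →+* S) {k : ℕ}
    (z : Matrix (Fin 1) (Fin k) R) : mapU f (k + 1) (lowU z) = lowU (z.map f) := by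
  refine Units.ext ?_
  rw [mapU_val]
  change (blk 1 0 z 1).map f = blk 1 0 (z.map f) 1
  rw [blk, blk, ← Matrix.submatrix_map, Matrix.fromBlocks_map]
  simp

/-- Every element of the stabilizer of the last basis vector is a lower unitriangular matrix times
a stabilized one: the stabilizer is `R^k ⋊ GL_k(R)`. -/
theorem exists_eq_lowU_mul_stabU {k : ℕ} {R : Type*} [Ring R] (g : GLu (k + 1) R)
    (hg : g.1.mulVec (lastVec k R) = lastVec k R) :
    ∃ (z : Matrix (Fin 1) (Fin k) R) (x : GLu k R), g = lowU z * stabU k R x := by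
  have hg' : (g⁻¹).1.mulVec (lastVec k R) = lastVec k R := by
    conv_lhs => rw [← hg]
    simp [Matrix.mulVec_mulVec]
  obtain ⟨X, y, z, w, h⟩ := exists_eq_blk g.1
  obtain ⟨X', y', z', w', h'⟩ := exists_eq_blk (g⁻¹).1
  rw [h, blk_mulVec_lastVec] at hg
  rw [h', blk_mulVec_lastVec] at hg'
  obtain ⟨rfl, rfl⟩ := hg
  obtain ⟨rfl, rfl⟩ := hg'
  have h1 : g.1 * (g⁻¹).1 = 1 := by simp
  have h2 : (g⁻¹).1 * g.1 = 1 := by simp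
  rw [h, h', blk_mul] at h1 h2
  have e1 : X * X' = 1 := by simpa using (blk_inj (h1.trans blk_one.symm)).1
  have e2 : X' * X = 1 := by simpa using (blk_inj (h2.trans blk_one.symm)).1
  refine ⟨z * X', ⟨X, X', e1, e2⟩, Units.ext ?_⟩
  rw [h, Units.val_mul]
  change _ = blk 1 0 (z * X') 1 * blk X 0 0 1
  rw [blk_mul]
  simp [Matrix.mul_assoc, e2]

/-! ### The homotopy hypotheses in terms of paths in groups of units -/

/-- The continuous bijection from the units topology to the subspace topology. -/
def toGLs (k : ℕ) (R : Type*) [Ring R] [TopologicalSpace R] : C(GLu k R, GLs k R) :=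
  ⟨fun u => ⟨u.1, u.isUnit⟩, Units.continuous_val.subtype_mk _⟩

/-- The inverse of `toGLs`; its continuity is the continuity of inversion in Banach algebras. -/
def ofGLs (k : ℕ) (R : Type*) [NormedRing R] [CompleteSpace R] : C(GLs k R, GLu k R) :=
  ⟨fun M => M.2.unit, (isOpenEmbedding_glu_val k R).isInducing.continuous_iff.2
    continuous_subtype_val⟩

theorem ofGLs_eq {k : ℕ} {R : Type*} [NormedRing R] [CompleteSpace R] {M : GLs k R}
    {u : GLu k R} (h : M.1 = u.1) : ofGLs k R M = u := Units.ext h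

/-- Injectivity on `π_0`, in terms of paths to the identity. -/
theorem joined_of_pikInj {S : Type*} [NormedRing S] [CompleteSpace S] {k : ℕ}
    (h : pikInj 0 S k) (u : GLu k S) (hu : Joined 1 (stabU k S u)) : Joined 1 u := by
  obtain ⟨p⟩ := hu
  -- the zero-cube is a point with empty boundary, so every element is a generalized loop
  let pt : GLs k S → GenLoop (Fin 0) (GLs k S) (GLone k S) := fun X =>
    ⟨ContinuousMap.const _ X, fun y hy => hy.elim fun i _ => i.elim0⟩
  obtain ⟨H⟩ := h (pt (GLone k S)) (pt (toGLs k S u)) ⟨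
    { toFun := fun z => toGLs (k + 1) S (p z.1)
      continuous_toFun := by fun_prop
      map_zero_left := fun y => by
        simp only [Path.source]
        exact stabGL_one.symm
      map_one_left := fun y => by
        simp only [Path.target]
        rfl
      prop' := fun t y hy => hy.elim fun i _ => i.elim0 }⟩
  refine ⟨⟨⟨fun t => ofGLs k S (H (t, Fin.elim0)), by fun_prop⟩, ?_, ?_⟩⟩
  · exact ofGLs_eq (congrArg Subtype.val (H.map_zero_left _))
  · exact ofGLs_eq (congrArg Subtype.val (H.map_one_left _))

/-- Surjectivity on `π_1`: every loop `p` at `1` is homotopic, relative to its end points, to the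
stabilization of a loop `x`. -/
theorem exists_loop_of_pikSurj {S : Type*} [NormedRing S] [CompleteSpace S] {k : ℕ}
    (h : pikSurj 1 S k) (p : C(I, GLu (k + 1) S)) (hp0 : p 0 = 1) (hp1 : p 1 = 1) :
    ∃ x : C(I, GLu k S), x 0 = 1 ∧ x 1 = 1 ∧ ∃ H : C(I × I, GLu (k + 1) S),
      (∀ t, H (0, t) = stabU k S (x t)) ∧ (∀ t, H (1, t) = p t) ∧
        ∀ s, ∀ t ∈ ({0, 1} : Set I), H (s, t) = 1 := by
  let b : GenLoop (Fin 1) (GLs (k + 1) S) (GLone (k + 1) S) :=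
    ⟨⟨fun y => toGLs (k + 1) S (p (y 0)), by fun_prop⟩, by
      rintro y ⟨i, hi⟩
      obtain rfl : i = 0 := Subsingleton.elim _ _
      have : p (y 0) = 1 := by
        rcases hi with hi | hi <;> rw [hi] <;> assumption
      simp only [ContinuousMap.coe_mk, this]
      rfl⟩
  obtain ⟨a, ⟨H⟩⟩ := h b
  have hbd : ∀ t ∈ ({0, 1} : Set I), (fun _ => t : Fin 1 → I) ∈ Cube.boundary (Fin 1) :=
    fun t ht => ⟨0, ht⟩
  have ha : ∀ t ∈ ({0, 1} : Set I), a.1 (fun _ => t) = GLone k S := fun t ht =>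
    a.2 _ (hbd t ht)
  refine ⟨⟨fun t => ofGLs k S (a.1 fun _ => t), by fun_prop⟩,
    ofGLs_eq (congrArg Subtype.val (ha 0 (by simp))),
    ofGLs_eq (congrArg Subtype.val (ha 1 (by simp))),
    ⟨fun z => ofGLs (k + 1) S (H (z.1, fun _ => z.2)), by fun_prop⟩, fun t => ?_, fun t => ?_,
    fun s t ht => ?_⟩
  · exact ofGLs_eq (congrArg Subtype.val (H.map_zero_left _))
  · exact ofGLs_eq (congrArg Subtype.val (H.map_one_left _))
  · exact ofGLs_eq (congrArg Subtype.val
      ((H.prop' s _ (hbd t ht)).trans ((GenLoop.push (stabCM k S) stabCM_one a).2 _ (hbd t ht))))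

/-! ### Moving a vector to the last basis vector inside the kernel -/

theorem map_mulVec_comp {R S : Type*} [Ring R] [Ring S] (f : R →+* S) {k : ℕ} (u : GLu k R)
    (v : Fin k → R) : (mapU f k u).1.mulVec (f ∘ v) = f ∘ u.1.mulVec v := by
  funext i
  exact (f.map_mulVec u.1 v i).symm

theorem comp_lastVec {R S : Type*} [Ring R] [Ring S] (f : R →+* S) (k : ℕ) :
    f ∘ lastVec k R = lastVec k S := by
  funext i
  simp [lastVec, Pi.single_apply, apply_ite f]

theorem inv_mulVec_eq {R : Type*} [Ring R] {k : ℕ} {u : GLu k R} {v w : Fin k → R}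
    (h : u.1.mulVec v = w) : (u⁻¹).1.mulVec w = v := by
  rw [← h]
  simp [Matrix.mulVec_mulVec]

section Relative

variable {R S : Type*} [NormedRing R] [NormedAlgebra ℝ R] [CompleteSpace R] [NormedRing S]
  [NormedAlgebra ℝ S] [CompleteSpace S] (f : R →+* S) (τ : C(S, R)) (hτ : ∀ x, f (τ x) = x) (hτ0 : τ 0 = 0)
  (hf : Continuous f)
  {k : ℕ} (hR : IsConnected (Lg (k + 1) R)) (hinj : pikInj 0 S k) (hsurj : pikSurj 1 S k)
  {c : Fin (k + 1) → R} (hc : c ∈ Lg (k + 1) R) (hfc : f ∘ c = lastVec k S)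

include hτ hτ0 hf hR hinj hc hfc in
/-- A path in `GL_{k+1}(R)` from `1` to an element that lies over `1` and moves `c` to the last basis
vector. The end point `u` of an arbitrary path moving `c` there lies over an element of the
stabilizer of the last basis vector; by injectivity on `π_0` that element is joined to `1` within the
stabilizer, and a lift `Q` of this path corrects `u`. -/
theorem exists_path_endpoint_trivial :
    ∃ p : C(I, GLu (k + 1) R), p 0 = 1 ∧ mapU f (k + 1) (p 1) = 1 ∧
      (p 1).1.mulVec c = lastVec k R := by
  obtain ⟨u, ⟨p⟩, hu⟩ := orbit_of_isConnected hR hc (lastVec_mem_Lg k R)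
  have hg : (mapU f (k + 1) u).1.mulVec (lastVec k S) = lastVec k S := by
    conv_lhs => rw [← hfc]
    rw [map_mulVec_comp, hu, comp_lastVec]
  obtain ⟨z, x, hzx⟩ := exists_eq_lowU_mul_stabU _ hg
  have hcm := continuous_mapU f hf (k + 1)
  have hx : Joined 1 (stabU k S x) := by
    refine ⟨⟨⟨fun t => lowU (-((t : ℝ) • z)) * mapU f (k + 1) (p t), by fun_prop⟩, ?_, ?_⟩⟩
    · simp [lowU_zero]
    · simp [hzx, ← lowU_inv]
  obtain ⟨xp⟩ := joined_of_pikInj hinj x hx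
  obtain ⟨Y, hY, hY0⟩ := exists_path_lift f τ hτ hτ0 xp.toContinuousMap xp.source
  let Q : C(I, GLu (k + 1) R) :=
    ⟨fun t => lowU ((t : ℝ) • z.map τ) * stabU k R (Y t), by fun_prop⟩
  have hQ0 : Q 0 = 1 := by simp [Q, lowU_zero, hY0]
  have hQ1 : mapU f (k + 1) (Q 1) = mapU f (k + 1) u := by
    have hz : (z.map τ).map f = z := by ext i j; simp [hτ]
    simp only [Q, ContinuousMap.coe_mk, map_mul, mapU_stabU, hY, hzx]
    simp [mapU_lowU, hz]
  have hQe : (Q 1).1.mulVec (lastVec k R) = lastVec k R := by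
    simp only [Q, ContinuousMap.coe_mk, Units.val_mul, ← Matrix.mulVec_mulVec,
      stabU_mulVec_lastVec, lowU_mulVec_lastVec]
  refine ⟨⟨fun t => (Q t)⁻¹ * p t, by fun_prop⟩, by simp [hQ0], by simp [hQ1], ?_⟩
  simp only [ContinuousMap.coe_mk, Path.target, Units.val_mul, ← Matrix.mulVec_mulVec, hu]
  exact inv_mulVec_eq hQe

include hτ hτ0 hf hR hinj hsurj hc hfc in
/-- As `exists_path_endpoint_trivial`, but with the whole path lying over `1`. The path `p` given
there lies over a loop, homotopic by surjectivity on `π_1` to a stabilized loop `x`. Lift `x` to a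
path `Y`, and the null-homotopic loop `(stab x)⁻¹ * f p` to a loop `q`; then
`(stab Y)⁻¹ * p * q⁻¹` lies over `1`, and it still moves `c` to the last basis vector because
`stab (Y 1)` fixes that vector. -/
theorem exists_path_in_kernel :
    ∃ q : C(I, GLu (k + 1) R), (∀ t, mapU f (k + 1) (q t) = 1) ∧ q 0 = 1 ∧
      (q 1).1.mulVec c = lastVec k R := by
  obtain ⟨p, hp0, hp1, hpc⟩ := exists_path_endpoint_trivial f τ hτ hτ0 hf hR hinj hc hfc
  have hcm := continuous_mapU f hf (k + 1)
  obtain ⟨x, hx0, hx1, H, hH0, hH1, hHb⟩ := exists_loop_of_pikSurj hsurj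
    ⟨fun t => mapU f (k + 1) (p t), by fun_prop⟩ (by simp [hp0]) (by simp [hp1])
  obtain ⟨Y, hY, hY0⟩ := exists_path_lift f τ hτ hτ0 x hx0
  obtain ⟨q, hq, hqb⟩ := exists_lift_of_homotopy f τ hτ hτ0 {0, 1}
    ⟨fun z : I × I => (stabU k S (x z.2))⁻¹ * H z, by fun_prop⟩
    (by simp [hH0]) (by
      intro s t ht
      have : x t = 1 := by rcases ht with rfl | rfl <;> assumption
      simp [this, hHb s t ht])
  refine ⟨⟨fun t => (stabU k R (Y t))⁻¹ * p t * (q t)⁻¹, by fun_prop⟩, fun t => ?_, ?_, ?_⟩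
  · have := hq t
    simp only [ContinuousMap.coe_mk, hH1] at this
    simp [mapU_stabU, hY, this]
  · simp [hY0, hp0, hqb 0 (by simp)]
  · simp only [ContinuousMap.coe_mk, hqb 1 (by simp), inv_one, mul_one, Units.val_mul,
      ← Matrix.mulVec_mulVec, hpc]
    exact inv_mulVec_eq (stabU_mulVec_lastVec _)

end Relative

/-! ### The pullback -/

theorem vecMul_inv_dotProduct_mulVec {R : Type*} [Ring R] {k : ℕ} (u : GLu k R)
    (w v : Fin k → R) : Matrix.vecMul w (u⁻¹).1 ⬝ᵥ u.1.mulVec v = w ⬝ᵥ v := by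
  rw [Matrix.dotProduct_mulVec, Matrix.vecMul_vecMul]
  simp

open scoped CStarAlgebra in
/-- A path in `GL_{k+1}` of the pullback, given by its two components `p` and `q`, that starts at `1`
and moves `(b, c)` to the last basis vector. -/
theorem exists_paths_pullback {B C D : Type*} [CStarAlgebra B] [CStarAlgebra C] [CStarAlgebra D]
    (δ : B →⋆ₐ[ℂ] D) (γ : C →⋆ₐ[ℂ] D) (hγ : Function.Surjective γ) {k : ℕ}
    (hB : IsConnected (Lg (k + 1) B)) (hC : IsConnected (Lg (k + 1) C))
    (hinj : pikInj 0 D k) (hsurj : pikSurj 1 D k) {b : Fin (k + 1) → B} {c : Fin (k + 1) → C}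
    (hb : b ∈ Lg (k + 1) B) (hc : c ∈ Lg (k + 1) C) (hbc : ∀ i, δ (b i) = γ (c i)) :
    ∃ (p : C(I, GLu (k + 1) B)) (q : C(I, GLu (k + 1) C)), p 0 = 1 ∧ q 0 = 1 ∧
      (∀ t, mapU (δ : B →+* D) (k + 1) (p t) = mapU (γ : C →+* D) (k + 1) (q t)) ∧
      (p 1).1.mulVec b = lastVec k B ∧ (q 1).1.mulVec c = lastVec k C := by
  have hδc : Continuous (δ : B →+* D) := map_continuous δ
  have hγc : Continuous (γ : C →+* D) := map_continuous γ
  obtain ⟨τ, hτ, hτ0⟩ := exists_continuous_section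
    (⟨γ.toAlgHom.toLinearMap.restrictScalars ℝ, hγc⟩ : C →L[ℝ] D) hγ
  obtain ⟨u, ⟨p⟩, hu⟩ := orbit_of_isConnected hB hb (lastVec_mem_Lg k B)
  have hcm := continuous_mapU (δ : B →+* D) hδc (k + 1)
  obtain ⟨q, hq, hq0⟩ := exists_path_lift (γ : C →+* D) τ hτ hτ0
    ⟨fun t => mapU (δ : B →+* D) (k + 1) (p t), by fun_prop⟩ (by simp)
  have hc' : (q 1).1.mulVec c ∈ Lg (k + 1) C := by
    obtain ⟨w, hw⟩ := hc
    exact ⟨Matrix.vecMul w ((q 1)⁻¹).1, (vecMul_inv_dotProduct_mulVec _ _ _).trans hw⟩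
  have hγe : (γ : C →+* D) ∘ (q 1).1.mulVec c = lastVec k D := by
    have : (γ : C →+* D) ∘ c = (δ : B →+* D) ∘ b := funext fun i => (hbc i).symm
    rw [← map_mulVec_comp, hq, this]
    simp only [ContinuousMap.coe_mk, Path.target]
    rw [map_mulVec_comp, hu, comp_lastVec]
  obtain ⟨r, hr, hr0, hr1⟩ := exists_path_in_kernel (γ : C →+* D) τ hτ hτ0 hγc hC hinj hsurj
    hc' hγe
  refine ⟨p.toContinuousMap, r * q, p.source, by simp [hr0, hq0], fun t => ?_, ?_, ?_⟩
  · simp [hr, hq]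
  · simpa using hu
  · simpa [Matrix.mulVec_mulVec] using hr1

/-- A path of invertible matrices over the pullback moves a unimodular vector through unimodular
vectors: `w * P⁻¹` is a left inverse of `P * v` whenever `w` is one of `v`. -/
theorem joinedIn_of_paths {B C D : Type*} [CStarAlgebra B] [CStarAlgebra C] [CStarAlgebra D]
    (δ : B →⋆ₐ[ℂ] D) (γ : C →⋆ₐ[ℂ] D) {k : ℕ} {v : Fin (k + 1) → ↥(pullbackAlg δ γ)}
    (hv : v ∈ Lg (k + 1) ↥(pullbackAlg δ γ)) (p : C(I, GLu (k + 1) B)) (q : C(I, GLu (k + 1) C))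
    (hp0 : p 0 = 1) (hq0 : q 0 = 1)
    (hpq : ∀ t, mapU (δ : B →+* D) (k + 1) (p t) = mapU (γ : C →+* D) (k + 1) (q t))
    (hp1 : (p 1).1.mulVec (fun i => (v i).1.1) = lastVec k B)
    (hq1 : (q 1).1.mulVec (fun i => (v i).1.2) = lastVec k C) :
    JoinedIn (Lg (k + 1) ↥(pullbackAlg δ γ)) v (lastVec k _) := by
  obtain ⟨w, hw⟩ := hv
  have hmem : ∀ t i, (((p t).1.mulVec (fun i => (v i).1.1) i,
      (q t).1.mulVec (fun i => (v i).1.2) i) : B × C) ∈ pullbackAlg δ γ := fun t i => by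
    have h1 := congrFun (map_mulVec_comp (δ : B →+* D) (p t) (fun i => (v i).1.1)) i
    have h2 := congrFun (map_mulVec_comp (γ : C →+* D) (q t) (fun i => (v i).1.2)) i
    have h3 : (δ : B →+* D) ∘ (fun i => (v i).1.1) = (γ : C →+* D) ∘ (fun i => (v i).1.2) :=
      funext fun i => (v i).2
    rw [hpq, h3] at h1
    exact h1.symm.trans h2
  have hmem' : ∀ t i, ((Matrix.vecMul (fun i => (w i).1.1) ((p t)⁻¹).1 i,
      Matrix.vecMul (fun i => (w i).1.2) ((q t)⁻¹).1 i) : B × C) ∈ pullbackAlg δ γ := fun t i => by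
    have h1 := (δ : B →+* D).map_vecMul ((p t)⁻¹).1 (fun i => (w i).1.1) i
    have h2 := (γ : C →+* D).map_vecMul ((q t)⁻¹).1 (fun i => (w i).1.2) i
    have h3 : (δ : B →+* D) ∘ (fun i => (w i).1.1) = (γ : C →+* D) ∘ (fun i => (w i).1.2) :=
      funext fun i => (w i).2
    have h4 : ((p t)⁻¹).1.map (δ : B →+* D) = ((q t)⁻¹).1.map (γ : C →+* D) := by
      rw [← mapU_val, ← mapU_val, map_inv, map_inv, hpq]
    rw [h3, h4] at h1
    exact h1.trans h2.symm
  have hw1 : (fun i => (w i).1.1) ⬝ᵥ (fun i => (v i).1.1) = 1 := by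
    have := congrArg (fun x : ↥(pullbackAlg δ γ) => x.1.1) hw
    simpa [Prod.fst_sum, dotProduct] using this
  have hw2 : (fun i => (w i).1.2) ⬝ᵥ (fun i => (v i).1.2) = 1 := by
    have := congrArg (fun x : ↥(pullbackAlg δ γ) => x.1.2) hw
    simpa [Prod.snd_sum, dotProduct] using this
  refine ⟨⟨⟨fun t i => ⟨_, hmem t i⟩, ?_⟩, ?_, ?_⟩, fun t => ⟨fun i => ⟨_, hmem' t i⟩, ?_⟩⟩
  · refine continuous_pi fun i => Continuous.subtype_mk (Continuous.prodMk ?_ ?_) _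
    · exact (continuous_apply i).comp
        ((Units.continuous_val.comp p.continuous).matrix_mulVec continuous_const)
    · exact (continuous_apply i).comp
        ((Units.continuous_val.comp q.continuous).matrix_mulVec continuous_const)
  · funext i
    refine Subtype.ext ?_
    simp [hp0, hq0]
  · funext i
    refine Subtype.ext ?_
    rcases eq_or_ne i (Fin.last k) with rfl | hi
    · simp [hp1, hq1, lastVec]
    · simp [hp1, hq1, lastVec, hi]
  · refine Subtype.ext (Prod.ext ?_ ?_)
    · have : Matrix.vecMul (fun i => (w i).1.1) ((p t)⁻¹).1 ⬝ᵥ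
          (p t).1.mulVec (fun i => (v i).1.1) = 1 :=
        (vecMul_inv_dotProduct_mulVec _ _ _).trans hw1
      simpa [Prod.fst_sum, dotProduct] using this
    · have : Matrix.vecMul (fun i => (w i).1.2) ((q t)⁻¹).1 ⬝ᵥ
          (q t).1.mulVec (fun i => (v i).1.2) = 1 :=
        (vecMul_inv_dotProduct_mulVec _ _ _).trans hw2
      simpa [Prod.snd_sum, dotProduct] using this

theorem isConnected_Lg_pullback {B C D : Type*} [CStarAlgebra B] [CStarAlgebra C]
    [CStarAlgebra D] (δ : B →⋆ₐ[ℂ] D) (γ : C →⋆ₐ[ℂ] D)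
    (h : Function.Surjective γ ∨ Function.Surjective δ) {k : ℕ}
    (hB : IsConnected (Lg (k + 1) B)) (hC : IsConnected (Lg (k + 1) C))
    (hinj : pikInj 0 D k) (hsurj : pikSurj 1 D k) :
    IsConnected (Lg (k + 1) ↥(pullbackAlg δ γ)) := by
  refine IsPathConnected.isConnected ⟨lastVec k _, lastVec_mem_Lg k _, fun {v} hv => ?_⟩
  refine JoinedIn.symm ?_
  have hb : (fun i => (v i).1.1) ∈ Lg (k + 1) B := by
    obtain ⟨w, hw⟩ := hv
    refine ⟨fun i => (w i).1.1, ?_⟩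
    have := congrArg (fun x : ↥(pullbackAlg δ γ) => x.1.1) hw
    simpa [Prod.fst_sum, dotProduct] using this
  have hc : (fun i => (v i).1.2) ∈ Lg (k + 1) C := by
    obtain ⟨w, hw⟩ := hv
    refine ⟨fun i => (w i).1.2, ?_⟩
    have := congrArg (fun x : ↥(pullbackAlg δ γ) => x.1.2) hw
    simpa [Prod.snd_sum, dotProduct] using this
  rcases h with h | h
  · obtain ⟨p, q, hp0, hq0, hpq, hp1, hq1⟩ := exists_paths_pullback δ γ h hB hC hinj hsurj hb hc
      (fun i => (v i).2)
    exact joinedIn_of_paths δ γ hv p q hp0 hq0 hpq hp1 hq1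
  · obtain ⟨q, p, hq0, hp0, hpq, hq1, hp1⟩ := exists_paths_pullback γ δ h hC hB hinj hsurj hc hb
      (fun i => (v i).2.symm)
    exact joinedIn_of_paths δ γ hv p q hp0 hq0 (fun t => (hpq t).symm) hp1 hq1

/-- If a rank of the form `sInf {N | ∃ n, N = n ∧ 1 ≤ n ∧ ∀ m, P n m}` is at most a finite `n`,
then `n` itself has the defining property, provided that property is monotone in `n`. -/
theorem of_rank_le {P : ℕ → ℕ → Prop} (hP : ∀ a b m, a ≤ b → P a m → P b m) {n : ℕ}
    (h : sInf {N : ℕ∞ | ∃ n : ℕ, N = n ∧ 1 ≤ n ∧ ∀ m : ℕ, P n m} ≤ n) :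
    1 ≤ n ∧ ∀ m : ℕ, P n m := by
  have hne : {N : ℕ∞ | ∃ n : ℕ, N = n ∧ 1 ≤ n ∧ ∀ m : ℕ, P n m}.Nonempty := by
    by_contra hemp
    rw [Set.not_nonempty_iff_eq_empty] at hemp
    rw [hemp, sInf_empty] at h
    exact ENat.natCast_ne_top n (top_le_iff.1 h)
  obtain ⟨a, ha, ha1, haP⟩ := csInf_mem hne
  rw [ha] at h
  have han : a ≤ n := by exact_mod_cast h
  exact ⟨ha1.trans han, fun m => hP a n m han (haP m)⟩

/-- **Theorem.** For a pullback `A = B ⊕_D C` of unital C*-algebras along `δ : B → D`,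
`γ : C → D` with `γ` or `δ` surjective, one has
`csr(A) ≤ max {csr(B), csr(C), inj_0(D), surj_1(D)}`. -/
theorem csr_pullback_le {B C D : Type*} [CStarAlgebra B] [CStarAlgebra C] [CStarAlgebra D]
    (δ : B →⋆ₐ[ℂ] D) (γ : C →⋆ₐ[ℂ] D)
    (hsurj : Function.Surjective γ ∨ Function.Surjective δ) :
    csr ↥(pullbackAlg δ γ) ≤ max (csr B) (max (csr C) (max (injRank 0 D) (surjRank 1 D))) := by
  generalize hN : max (csr B) (max (csr C) (max (injRank 0 D) (surjRank 1 D))) = N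
  induction N using ENat.recTopCoe with
  | top => exact le_top
  | coe n =>
    have hle := hN.le
    simp only [max_le_iff] at hle
    obtain ⟨hB, hC, hinj, hsur⟩ := hle
    obtain ⟨hn, hB⟩ := of_rank_le (P := fun n m => n ≤ m → IsConnected (Lg m B))
      (fun a b m hab h hb => h (hab.trans hb)) hB
    obtain ⟨-, hC⟩ := of_rank_le (P := fun n m => n ≤ m → IsConnected (Lg m C))
      (fun a b m hab h hb => h (hab.trans hb)) hC
    obtain ⟨-, hinj⟩ := of_rank_le (P := fun n m => n ≤ m + 1 → pikInj 0 D m)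
      (fun a b m hab h hb => h (hab.trans hb)) hinj
    obtain ⟨-, hsur⟩ := of_rank_le (P := fun n m => n ≤ m + 1 → pikSurj 1 D m)
      (fun a b m hab h hb => h (hab.trans hb)) hsur
    refine sInf_le ⟨n, rfl, hn, fun m hm => ?_⟩
    obtain ⟨k, rfl⟩ : ∃ k, m = k + 1 := ⟨m - 1, by omega⟩
    exact isConnected_Lg_pullback δ γ hsurj (hB _ hm) (hC _ hm) (hinj k hm) (hsur k hm)

end
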